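/- arXiv:0909.4865 — 2 statements merged into one kernel-verified Lean document; each statement's English description precedes it below -/
import Mathlib

section
/- Rank-3 criterion for quintics: let f = α₀x⁵ + 5α₁x⁴y + 10α₂x³y² + 10α₃x²y³ + 5α₄xy⁴ + α₅y⁵ be a real binary quintic with distinct roots (squarefree over ℂ), whose 3×4 Hankel matrix [[α₀,α₁,α₂,α₃],[α₁,α₂,α₃,α₄],[α₂,α₃,α₄,α₅]] has rank 3, and let g(t) = M₀t³ − M₁t² + M₂t − M₃ where M₀ = det[[α₁,α₂,α₃],[α₂,α₃,α₄],[α₃,α₄,α₅]], M₁ = det[[α₀,α₂,α₃],[α₁,α₃,α₄],[α₂,α₄,α₅]], M₂ = det[[α₀,α₁,α₃],[α₁,α₂,α₄],[α₂,α₃,α₅]], M₃ = det[[α₀,α₁,α₂],[α₁,α₂,α₃],[α₂,α₃,α₄]]. If g has three distinct real roots (as a polynomial of degree 3), then the real rank of f is 3. -/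
open MvPolynomial

noncomputable section

/-- The real linear binary form `a·x + b·y`. -/
def lin (a b : ℝ) : MvPolynomial (Fin 2) ℝ := C a * X 0 + C b * X 1

/-- `f` is a sum of `r` terms `cⱼ · ℓⱼ^d` with `ℓⱼ` nonzero real linear forms. -/
def HasDecomp (f : MvPolynomial (Fin 2) ℝ) (d r : ℕ) : Prop :=
  ∃ c a b : Fin r → ℝ, (∀ j, (a j, b j) ≠ (0, 0)) ∧
    f = ∑ j, C (c j) * lin (a j) (b j) ^ d

/-- The real (symmetric) rank of a binary form of degree `d`:
the least number of `d`-th powers of real linear forms needed to write `f`. -/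
def realRank (f : MvPolynomial (Fin 2) ℝ) (d : ℕ) : ℕ :=
  sInf {r | HasDecomp f d r}

/-- The set of real projective roots of a binary form. -/
def projRoots (f : MvPolynomial (Fin 2) ℝ) : Set (Projectivization ℝ (Fin 2 → ℝ)) :=
  {p | eval p.rep f = 0}

/-- `f` is a product of `d` pairwise non-proportional real linear forms,
i.e. `f` has `d` distinct real roots. -/
def SplitsDistinct (f : MvPolynomial (Fin 2) ℝ) (d : ℕ) : Prop :=
  ∃ a b : Fin d → ℝ, (∀ j, (a j, b j) ≠ (0, 0)) ∧
    (∀ i j, i ≠ j → a i * b j ≠ a j * b i) ∧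
    f = ∏ j, lin (a j) (b j)

/-- `f` has distinct roots, i.e. it is squarefree as a complex polynomial. -/
def SquarefreeC (f : MvPolynomial (Fin 2) ℝ) : Prop :=
  Squarefree (MvPolynomial.map (algebraMap ℝ ℂ) f)

/-- The linear change of variables of `f` by the matrix `A`: `f(A(x,y))`. -/
def subst (A : Matrix (Fin 2) (Fin 2) ℝ) (f : MvPolynomial (Fin 2) ℝ) :
    MvPolynomial (Fin 2) ℝ :=
  aeval (fun i => C (A i 0) * X 0 + C (A i 1) * X 1) f

/-- The complex rank of a real binary form of degree `d`. -/
def complexRank (f : MvPolynomial (Fin 2) ℝ) (d : ℕ) : ℕ :=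
  sInf {r | ∃ a b : Fin r → ℂ, (∀ j, (a j, b j) ≠ (0, 0)) ∧
    MvPolynomial.map (algebraMap ℝ ℂ) f = ∑ j, (C (a j) * X 0 + C (b j) * X 1) ^ d}

lemma quintic_ext (p₀ p₁ p₂ p₃ p₄ p₅ c a b c' a' b' : ℝ)
    (h : (C p₀ * X 0 ^ 5 + C (5 * p₁) * X 0 ^ 4 * X 1 +
      C (10 * p₂) * X 0 ^ 3 * X 1 ^ 2 + C (10 * p₃) * X 0 ^ 2 * X 1 ^ 3 +
      C (5 * p₄) * X 0 * X 1 ^ 4 + C p₅ * X 1 ^ 5 : MvPolynomial (Fin 2) ℝ)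
      = C c * lin a b ^ 5 + C c' * lin a' b' ^ 5) :
    p₁ = c * a ^ 4 * b + c' * a' ^ 4 * b' ∧
    p₂ = c * a ^ 3 * b ^ 2 + c' * a' ^ 3 * b' ^ 2 ∧
    p₃ = c * a ^ 2 * b ^ 3 + c' * a' ^ 2 * b' ^ 3 ∧
    p₄ = c * a * b ^ 4 + c' * a' * b' ^ 4 ∧
    p₅ = c * b ^ 5 + c' * b' ^ 5 := by
  have e : ∀ s t : ℝ, p₀ * s ^ 5 + 5 * p₁ * s ^ 4 * t + 10 * p₂ * s ^ 3 * t ^ 2 +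
      10 * p₃ * s ^ 2 * t ^ 3 + 5 * p₄ * s * t ^ 4 + p₅ * t ^ 5
      = c * (a * s + b * t) ^ 5 + c' * (a' * s + b' * t) ^ 5 := by
    intro s t
    simpa [lin] using congrArg (eval ![s, t]) h
  have e0 := e 1 0
  have e1 := e 1 1
  have e2 := e 1 (-1)
  have e3 := e 1 2
  have e4 := e 1 (-2)
  have e5 := e 0 1
  clear e h
  ring_nf at e0 e1 e2 e3 e4 e5
  refine ⟨?_, ?_, ?_, ?_, ?_⟩ <;> linarith

/-- rank-3 criterion for quintics. If the Hankel matrix of `f` has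
rank 3 and the cubic `g` of `3×3` minors has three distinct real roots (as a
polynomial of degree 3), then the real rank of `f` is 3. -/
theorem stmt18 (α₀ α₁ α₂ α₃ α₄ α₅ : ℝ) (f : MvPolynomial (Fin 2) ℝ)
    (hf : f = C α₀ * X 0 ^ 5 + C (5 * α₁) * X 0 ^ 4 * X 1 +
      C (10 * α₂) * X 0 ^ 3 * X 1 ^ 2 + C (10 * α₃) * X 0 ^ 2 * X 1 ^ 3 +
      C (5 * α₄) * X 0 * X 1 ^ 4 + C α₅ * X 1 ^ 5)
    (hsf : SquarefreeC f)
    (hrk : (!![α₀, α₁, α₂, α₃; α₁, α₂, α₃, α₄; α₂, α₃, α₄, α₅]).rank = 3)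
    (g : Polynomial ℝ)
    (hg : g = Polynomial.C (!![α₁, α₂, α₃; α₂, α₃, α₄; α₃, α₄, α₅]).det * Polynomial.X ^ 3
      - Polynomial.C (!![α₀, α₂, α₃; α₁, α₃, α₄; α₂, α₄, α₅]).det * Polynomial.X ^ 2
      + Polynomial.C (!![α₀, α₁, α₃; α₁, α₂, α₄; α₂, α₃, α₅]).det * Polynomial.X
      - Polynomial.C (!![α₀, α₁, α₂; α₁, α₂, α₃; α₂, α₃, α₄]).det)
    (hdeg : g.degree = 3)
    (t₁ t₂ t₃ : ℝ) (h12 : t₁ ≠ t₂) (h13 : t₁ ≠ t₃) (h23 : t₂ ≠ t₃)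
    (hr1 : g.IsRoot t₁) (hr2 : g.IsRoot t₂) (hr3 : g.IsRoot t₃) :
    realRank f 5 = 3 := by
 
  have hM0 : (!![α₁, α₂, α₃; α₂, α₃, α₄; α₃, α₄, α₅]).det ≠ 0 := by
    intro h0
    have : g.degree ≤ 2 := by
      rw [hg, h0]
      simp only [map_zero, zero_mul, zero_sub]
      compute_degree
    rw [hdeg] at this
    exact absurd this (by decide)
  have h1 : g.eval t₁ = 0 := hr1
  have h2 : g.eval t₂ = 0 := hr2
  have h3 : g.eval t₃ = 0 := hr3
  clear hr1 hr2 hr3 hdeg hsf hrk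
  have k0 : (!![α₁, α₂, α₃; α₂, α₃, α₄; α₃, α₄, α₅]).det * α₂
      - (!![α₀, α₂, α₃; α₁, α₃, α₄; α₂, α₄, α₅]).det * α₃
      + (!![α₀, α₁, α₃; α₁, α₂, α₄; α₂, α₃, α₅]).det * α₄
      - (!![α₀, α₁, α₂; α₁, α₂, α₃; α₂, α₃, α₄]).det * α₅ = 0 := by
    simp [Matrix.det_fin_three]; ring
  have k1 : (!![α₁, α₂, α₃; α₂, α₃, α₄; α₃, α₄, α₅]).det * α₁
      - (!![α₀, α₂, α₃; α₁, α₃, α₄; α₂, α₄, α₅]).det * α₂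
      + (!![α₀, α₁, α₃; α₁, α₂, α₄; α₂, α₃, α₅]).det * α₃
      - (!![α₀, α₁, α₂; α₁, α₂, α₃; α₂, α₃, α₄]).det * α₄ = 0 := by
    simp [Matrix.det_fin_three]; ring
  have k2 : (!![α₁, α₂, α₃; α₂, α₃, α₄; α₃, α₄, α₅]).det * α₀
      - (!![α₀, α₂, α₃; α₁, α₃, α₄; α₂, α₄, α₅]).det * α₁
      + (!![α₀, α₁, α₃; α₁, α₂, α₄; α₂, α₃, α₅]).det * α₂
      - (!![α₀, α₁, α₂; α₁, α₂, α₃; α₂, α₃, α₄]).det * α₃ = 0 := by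
    simp [Matrix.det_fin_three]; ring
  have low : ∀ c a b c' a' b' : ℝ, f ≠ C c * lin a b ^ 5 + C c' * lin a' b' ^ 5 := by
    intro c a b c' a' b' h
    rw [hf] at h
    obtain ⟨q1, q2, q3, q4, q5⟩ := quintic_ext _ _ _ _ _ _ _ _ _ _ _ _ h
    apply hM0
    simp only [Matrix.det_fin_three, Matrix.of_apply, Matrix.cons_val', Matrix.cons_val]
    rw [q1, q2, q3, q4, q5]
    ring
  have up : HasDecomp f 5 3 := by
    subst hg
    simp only [Polynomial.eval_add, Polynomial.eval_sub, Polynomial.eval_mul, Polynomial.eval_C,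
      Polynomial.eval_pow, Polynomial.eval_X] at h1 h2 h3
    generalize (!![α₁, α₂, α₃; α₂, α₃, α₄; α₃, α₄, α₅]).det = m0 at *
    generalize (!![α₀, α₂, α₃; α₁, α₃, α₄; α₂, α₄, α₅]).det = m1 at *
    generalize (!![α₀, α₁, α₃; α₁, α₂, α₄; α₂, α₃, α₅]).det = m2 at *
    generalize (!![α₀, α₁, α₂; α₁, α₂, α₃; α₂, α₃, α₄]).det = m3 at *
    obtain ⟨c1, c2, c3, a0, a1, a2⟩ : ∃ c1 c2 c3 : ℝ, α₅ = c1 + c2 + c3 ∧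
        α₄ = c1 * t₁ + c2 * t₂ + c3 * t₃ ∧
        α₃ = c1 * t₁ ^ 2 + c2 * t₂ ^ 2 + c3 * t₃ ^ 2 := by
      have d12 := sub_ne_zero.2 h12
      have d13 := sub_ne_zero.2 h13
      have d23 := sub_ne_zero.2 h23
      refine ⟨(α₃ - (t₂ + t₃) * α₄ + t₂ * t₃ * α₅) / ((t₁ - t₂) * (t₁ - t₃)),
        -(α₃ - (t₁ + t₃) * α₄ + t₁ * t₃ * α₅) / ((t₁ - t₂) * (t₂ - t₃)),
        (α₃ - (t₁ + t₂) * α₄ + t₁ * t₂ * α₅) / ((t₁ - t₃) * (t₂ - t₃)), ?_, ?_, ?_⟩ <;>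
      · field_simp
        ring
    have a3 : α₂ = c1 * t₁ ^ 3 + c2 * t₂ ^ 3 + c3 * t₃ ^ 3 := by
      apply mul_left_cancel₀ hM0
      rw [a0, a1, a2] at k0
      linear_combination k0 - c1 * h1 - c2 * h2 - c3 * h3
    have a4 : α₁ = c1 * t₁ ^ 4 + c2 * t₂ ^ 4 + c3 * t₃ ^ 4 := by
      apply mul_left_cancel₀ hM0
      rw [a1, a2, a3] at k1
      linear_combination k1 - c1 * t₁ * h1 - c2 * t₂ * h2 - c3 * t₃ * h3
    have a5 : α₀ = c1 * t₁ ^ 5 + c2 * t₂ ^ 5 + c3 * t₃ ^ 5 := by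
      apply mul_left_cancel₀ hM0
      rw [a2, a3, a4] at k2
      linear_combination k2 - c1 * t₁ ^ 2 * h1 - c2 * t₂ ^ 2 * h2 - c3 * t₃ ^ 2 * h3
    refine ⟨![c1, c2, c3], ![t₁, t₂, t₃], ![1, 1, 1], ?_, ?_⟩
    · intro j
      fin_cases j <;> simp
    · rw [hf, a5, a4, a3, a2, a1, a0]
      have e5 : (C 5 : MvPolynomial (Fin 2) ℝ) = 5 := map_ofNat C 5
      have e10 : (C 10 : MvPolynomial (Fin 2) ℝ) = 10 := map_ofNat C 10
      simp only [Fin.sum_univ_three, lin, Matrix.cons_val, map_add, map_mul, map_pow, map_one,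
        e5, e10]
      ring
  unfold realRank
  apply le_antisymm
  · exact Nat.sInf_le up
  · refine le_csInf ⟨3, up⟩ ?_
    rintro r ⟨c, a, b, -, h⟩
    by_contra hlt
    have hlt' : r < 3 := not_le.1 hlt
    interval_cases r
    · exact low 0 0 0 0 0 0 (by rw [h]; simp)
    · exact low (c 0) (a 0) (b 0) 0 0 0 (by rw [h]; simp)
    · exact low (c 0) (a 0) (b 0) (c 1) (a 1) (b 1) (by rw [h]; simp [Fin.sum_univ_two])
end
end

section
/- Rank-4 criterion for quintics: let f = α₀x⁵ + 5α₁x⁴y + 10α₂x³y² + 10α₃x²y³ + 5α₄xy⁴ + α₅y⁵ be a real binary quintic with distinct roots (squarefree over ℂ) that does not have five real roots, whose 3×4 Hankel matrix [[α₀,α₁,α₂,α₃],[α₁,α₂,α₃,α₄],[α₂,α₃,α₄,α₅]] has rank 3, and let g(t) = M₀t³ − M₁t² + M₂t − M₃ where M₀ = det[[α₁,α₂,α₃],[α₂,α₃,α₄],[α₃,α₄,α₅]], M₁ = det[[α₀,α₂,α₃],[α₁,α₃,α₄],[α₂,α₄,α₅]], M₂ = det[[α₀,α₁,α₃],[α₁,α₂,α₄],[α₂,α₃,α₅]],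 M₃ = det[[α₀,α₁,α₂],[α₁,α₂,α₃],[α₂,α₃,α₄]]. If g has degree 3, exactly one real root, and a pair of distinct complex conjugate roots, then the real rank of f is 4. -/
open MvPolynomial

noncomputable section

lemma quintic_zero (d0 d1 d2 d3 d4 d5 : ℝ)
    (h : ∀ x y : ℝ, d0 * x ^ 5 + 5 * d1 * x ^ 4 * y + 10 * d2 * x ^ 3 * y ^ 2
      + 10 * d3 * x ^ 2 * y ^ 3 + 5 * d4 * x * y ^ 4 + d5 * y ^ 5 = 0) :
    d0 = 0 ∧ d1 = 0 ∧ d2 = 0 ∧ d3 = 0 ∧ d4 = 0 ∧ d5 = 0 := by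
  have h1 := h 1 0
  have h2 := h 0 1
  have h3 := h 1 1
  have h4 := h 1 (-1)
  have h5 := h 1 2
  have h6 := h 1 (-2)
  norm_num at h1 h2 h3 h4 h5 h6
  refine ⟨?_, ?_, ?_, ?_, ?_, ?_⟩ <;> linarith

lemma lower (α₀ α₁ α₂ α₃ α₄ α₅ t p q M₀ : ℝ) (hq : q ≠ 0) (hM : M₀ ≠ 0)
    (h0 : M₀ = α₁*α₃*α₅ - α₁*α₄*α₄ - α₂*α₂*α₅ + α₂*α₄*α₃ + α₃*α₂*α₄ - α₃*α₃*α₃)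
    (h1 : M₀ * (t + 2 * p) = α₀*α₃*α₅ - α₀*α₄*α₄ - α₂*α₁*α₅ + α₂*α₄*α₂ + α₃*α₁*α₄ - α₃*α₃*α₂)
    (h2 : M₀ * (2 * p * t + p^2 + q^2) =
      α₀*α₂*α₅ - α₀*α₄*α₃ - α₁*α₁*α₅ + α₁*α₄*α₂ + α₃*α₁*α₃ - α₃*α₂*α₂)
    (h3 : M₀ * (t * (p^2 + q^2)) =
      α₀*α₂*α₄ - α₀*α₃*α₃ - α₁*α₁*α₄ + α₁*α₃*α₂ + α₂*α₁*α₃ - α₂*α₂*α₂)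
    (c1 c2 c3 a1 a2 a3 b1 b2 b3 : ℝ)
    (e0 : α₀ = c1 * a1^5 + c2 * a2^5 + c3 * a3^5)
    (e1 : α₁ = c1 * (a1^4*b1) + c2 * (a2^4*b2) + c3 * (a3^4*b3))
    (e2 : α₂ = c1 * (a1^3*b1^2) + c2 * (a2^3*b2^2) + c3 * (a3^3*b3^2))
    (e3 : α₃ = c1 * (a1^2*b1^3) + c2 * (a2^2*b2^3) + c3 * (a3^2*b3^3))
    (e4 : α₄ = c1 * (a1*b1^4) + c2 * (a2*b2^4) + c3 * (a3*b3^4))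
    (e5 : α₅ = c1 * b1^5 + c2 * b2^5 + c3 * b3^5) : False := by
  subst e0 e1 e2 e3 e4 e5
  obtain ⟨K, hK⟩ : ∃ K, K = c1*c2*c3*((a1*b2-a2*b1)*(a1*b3-a3*b1)*(a2*b3-a3*b2))^2 := ⟨_, rfl⟩
  have k0 : M₀ = K * (b1*b2*b3) := by rw [h0, hK]; ring
  have k1 : M₀ * (t + 2 * p) = K * (a1*b2*b3+b1*a2*b3+b1*b2*a3) := by rw [h1, hK]; ring
  have k2 : M₀ * (2 * p * t + p^2 + q^2) = K * (a1*a2*b3+a1*b2*a3+b1*a2*a3) := by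
    rw [h2, hK]; ring
  have k3 : M₀ * (t * (p^2 + q^2)) = K * (a1*a2*a3) := by rw [h3, hK]; ring
  clear h0 h1 h2 h3 
  have hK0 : K ≠ 0 := by rintro rfl; simp at k0; exact hM k0
  have hV : a1*b2-a2*b1 ≠ 0 := by intro h; rw [h] at hK; apply hK0; rw [hK]; ring
  have hb1 : b1 ≠ 0 := by rintro rfl; simp at k0; exact hM k0
  have hb2 : b2 ≠ 0 := by rintro rfl; simp at k0; exact hM k0
  have key : ∀ s : ℝ, M₀ * ((s - t) * ((s-p)^2+q^2)) = K * ((b1*s-a1)*(b2*s-a2)*(b3*s-a3)) := by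
    intro s
    linear_combination s^3 * k0 - s^2 * k1 + s * k2 - k3
  have hs : ∀ s : ℝ, K * ((b1*s-a1)*(b2*s-a2)*(b3*s-a3)) = 0 → s = t := by
    intro s h
    rw [← key s] at h
    have : (s-p)^2+q^2 ≠ 0 := by positivity
    have := (mul_eq_zero.1 h).resolve_left hM
    have := (mul_eq_zero.1 this).resolve_right (by assumption)
    linarith
  have s1 := hs (a1/b1) (by field_simp; ring)
  have s2 := hs (a2/b2) (by field_simp; ring)
  rw [div_eq_iff hb1] at s1
  rw [div_eq_iff hb2] at s2
  apply hV; rw [s1, s2]; ring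

lemma no_decomp (α₀ α₁ α₂ α₃ α₄ α₅ t p q M₀ : ℝ) (hq : q ≠ 0) (hM : M₀ ≠ 0)
    (h0 : M₀ = α₁*α₃*α₅ - α₁*α₄*α₄ - α₂*α₂*α₅ + α₂*α₄*α₃ + α₃*α₂*α₄ - α₃*α₃*α₃)
    (h1 : M₀ * (t + 2 * p) = α₀*α₃*α₅ - α₀*α₄*α₄ - α₂*α₁*α₅ + α₂*α₄*α₂ + α₃*α₁*α₄ - α₃*α₃*α₂)
    (h2 : M₀ * (2 * p * t + p^2 + q^2) =
      α₀*α₂*α₅ - α₀*α₄*α₃ - α₁*α₁*α₅ + α₁*α₄*α₂ + α₃*α₁*α₃ - α₃*α₂*α₂)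
    (h3 : M₀ * (t * (p^2 + q^2)) =
      α₀*α₂*α₄ - α₀*α₃*α₃ - α₁*α₁*α₄ + α₁*α₃*α₂ + α₂*α₁*α₃ - α₂*α₂*α₂)
    (f : MvPolynomial (Fin 2) ℝ)
    (hf : ∀ x y : ℝ, eval ![x, y] f = α₀ * x ^ 5 + 5 * α₁ * x ^ 4 * y + 10 * α₂ * x ^ 3 * y ^ 2
      + 10 * α₃ * x ^ 2 * y ^ 3 + 5 * α₄ * x * y ^ 4 + α₅ * y ^ 5)
    (r : ℕ) (hr : r < 4) (h : HasDecomp f 5 r) : False := by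
  obtain ⟨c, a, b, -, hd⟩ := h
  have : ∃ c1 c2 c3 a1 a2 a3 b1 b2 b3 : ℝ, ∀ x y : ℝ, eval ![x, y] f =
      c1 * (a1 * x + b1 * y)^5 + c2 * (a2 * x + b2 * y)^5 + c3 * (a3 * x + b3 * y)^5 := by
    interval_cases r
    · refine ⟨0,0,0,0,0,0,0,0,0, fun x y => ?_⟩
      rw [hd]; simp
    · refine ⟨c 0,0,0,a 0,0,0,b 0,0,0, fun x y => ?_⟩
      rw [hd]; simp [lin]
    · refine ⟨c 0,c 1,0,a 0,a 1,0,b 0,b 1,0, fun x y => ?_⟩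
      rw [hd]; simp [lin, Fin.sum_univ_succ]
    · refine ⟨c 0,c 1,c 2,a 0,a 1,a 2,b 0,b 1,b 2, fun x y => ?_⟩
      rw [hd]; simp [lin, Fin.sum_univ_succ]; ring
  obtain ⟨c1, c2, c3, a1, a2, a3, b1, b2, b3, H⟩ := this
  obtain ⟨e0, e1, e2, e3, e4, e5⟩ := quintic_zero
    (α₀ - (c1 * a1^5 + c2 * a2^5 + c3 * a3^5))
    (α₁ - (c1 * (a1^4*b1) + c2 * (a2^4*b2) + c3 * (a3^4*b3)))
    (α₂ - (c1 * (a1^3*b1^2) + c2 * (a2^3*b2^2) + c3 * (a3^3*b3^2)))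
    (α₃ - (c1 * (a1^2*b1^3) + c2 * (a2^2*b2^3) + c3 * (a3^2*b3^3)))
    (α₄ - (c1 * (a1*b1^4) + c2 * (a2*b2^4) + c3 * (a3*b3^4)))
    (α₅ - (c1 * b1^5 + c2 * b2^5 + c3 * b3^5)) (by
      intro x y
      have := H x y
      rw [hf] at this
      linear_combination this)
  exact lower α₀ α₁ α₂ α₃ α₄ α₅ t p q M₀ hq hM h0 h1 h2 h3 c1 c2 c3 a1 a2 a3 b1 b2 b3
    (by linarith) (by linarith) (by linarith) (by linarith) (by linarith) (by linarith)

/-- the normal form, on values -/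
def NF (a c s X Y : ℝ) : ℝ :=
  a * X^5 - (c^4 - 6*c^2*s^2 + s^4) * (X^5 - 10*X^3*Y^2 + 5*X*Y^4)
    - (4*c^3*s - 4*c*s^3) * (5*X^4*Y - 10*X^2*Y^3 + Y^5)

lemma decomp_of (f : MvPolynomial (Fin 2) ℝ) (ρ x1 x2 y1 y2 : ℝ)
    (hdet : x1 * y2 - x2 * y1 ≠ 0) (c p q : Fin 4 → ℝ) (hpq : ∀ j, (p j, q j) ≠ (0,0))
    (hf : ∀ x y : ℝ, eval ![x, y] f =
      ρ * ∑ j, c j * (p j * (x1 * x + x2 * y) + q j * (y1 * x + y2 * y))^5) :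
    HasDecomp f 5 4 := by
  refine ⟨fun j => ρ * c j, fun j => p j * x1 + q j * y1, fun j => p j * x2 + q j * y2, ?_, ?_⟩
  · intro j h
    apply hpq j
    simp only [Prod.mk.injEq] at h ⊢
    obtain ⟨h1, h2⟩ := h
    constructor
    · apply (mul_eq_zero.1 (?_ : p j * (x1 * y2 - x2 * y1) = 0)).resolve_right hdet
      linear_combination y2 * h1 - y1 * h2
    · apply (mul_eq_zero.1 (?_ : q j * (x1 * y2 - x2 * y1) = 0)).resolve_right hdet
      linear_combination x1 * h2 - x2 * h1
  · apply MvPolynomial.funext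
    intro x
    have hx : x = ![x 0, x 1] := by ext i; fin_cases i <;> rfl
    rw [hx, hf, Finset.mul_sum]
    simp only [lin, map_sum, map_mul, map_pow, map_add, eval_C, eval_X]
    apply Finset.sum_congr rfl
    intro j _
    simp
    ring

lemma splits_of (f : MvPolynomial (Fin 2) ℝ) (ρ x1 x2 y1 y2 : ℝ) (hρ : ρ ≠ 0)
    (hdet : x1 * y2 - x2 * y1 ≠ 0) (p q : Fin 5 → ℝ)
    (hpq : ∀ i j, i ≠ j → p i * q j ≠ p j * q i)
    (hf : ∀ x y : ℝ, eval ![x, y] f =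
      ρ * ∏ j, (p j * (x1 * x + x2 * y) + q j * (y1 * x + y2 * y))) :
    SplitsDistinct f 5 := by
  have key : ∀ i j, i ≠ j → (p i * x1 + q i * y1) * (p j * x2 + q j * y2) ≠
      (p j * x1 + q j * y1) * (p i * x2 + q i * y2) := by
    intro i j hij h
    apply hpq i j hij
    rw [← sub_eq_zero]
    apply (mul_eq_zero.1 (?_ : (p i * q j - p j * q i) * (x1 * y2 - x2 * y1) = 0)).resolve_right hdet
    linear_combination h
  let k : Fin 5 → ℝ := fun j => if j = 0 then ρ else 1
  have hk : ∀ j, k j ≠ 0 := by intro j; simp only [k]; split_ifs <;> simp [hρ]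
  have key2 : ∀ i j, i ≠ j → (k i * (p i * x1 + q i * y1)) * (k j * (p j * x2 + q j * y2)) ≠
      (k j * (p j * x1 + q j * y1)) * (k i * (p i * x2 + q i * y2)) := by
    intro i j hij h
    apply key i j hij
    apply mul_left_cancel₀ (mul_ne_zero (hk i) (hk j))
    linear_combination h
  refine ⟨fun j => k j * (p j * x1 + q j * y1), fun j => k j * (p j * x2 + q j * y2), ?_, key2, ?_⟩
  · intro j h
    simp only [Prod.mk.injEq] at h
    obtain ⟨i, hi⟩ := exists_ne j
    apply key2 j i hi.symm
    rw [h.1, h.2]; ring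
  · apply MvPolynomial.funext
    intro x
    have hx : x = ![x 0, x 1] := by ext i; fin_cases i <;> rfl
    rw [hx, hf]
    simp [lin, Fin.prod_univ_succ, k, Fin.succ_ne_zero]
    ring

lemma nsf_of (f G : MvPolynomial (Fin 2) ℝ) (a b : ℝ)
    (hf : ∀ x y : ℝ, eval ![x, y] f = (a * x + b * y)^2 * eval ![x,y] G) : ¬ SquarefreeC f := by
  intro h
  have e : f = lin a b * lin a b * G := by
    apply MvPolynomial.funext
    intro x
    have hx : x = ![x 0, x 1] := by ext i; fin_cases i <;> rfl
    rw [hx, hf]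
    simp only [lin, map_mul, map_add, eval_C, eval_X]
    simp only [Matrix.cons_val_zero, Matrix.cons_val_one]
    ring
  unfold SquarefreeC at h
  have h2 := h (MvPolynomial.map (algebraMap ℝ ℂ) (lin a b)) ⟨MvPolynomial.map (algebraMap ℝ ℂ) G, by
    rw [e]; simp⟩
  have h3 := h2.map (MvPolynomial.eval (![(b:ℂ), -(a:ℂ)]))
  simp [lin] at h3
  apply h3
  ring

/-- Vandermonde + recurrence -/
lemma vand (s : Fin 4 → ℝ) (hs : Function.Injective s) (q0 q1 q2 q3 q4 : ℝ) (hq : q0 ≠ 0)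
    (hr : ∀ j, q0 * s j ^ 4 + q1 * s j ^ 3 + q2 * s j ^ 2 + q3 * s j + q4 = 0)
    (b0 b1 b2 b3 b4 b5 : ℝ)
    (h1 : q0 * b4 + q1 * b3 + q2 * b2 + q3 * b1 + q4 * b0 = 0)
    (h2 : q0 * b5 + q1 * b4 + q2 * b3 + q3 * b2 + q4 * b1 = 0) :
    ∃ c : Fin 4 → ℝ, b0 = ∑ j, c j ∧ b1 = ∑ j, c j * s j ∧ b2 = ∑ j, c j * s j ^ 2 ∧
      b3 = ∑ j, c j * s j ^ 3 ∧ b4 = ∑ j, c j * s j ^ 4 ∧ b5 = ∑ j, c j * s j ^ 5 := by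
  have hdet : IsUnit (Matrix.vandermonde s).det :=
    isUnit_iff_ne_zero.2 (Matrix.det_vandermonde_ne_zero_iff.2 hs)
  obtain ⟨c, hc⟩ : ∃ c, Matrix.vecMul c (Matrix.vandermonde s) = ![b0, b1, b2, b3] :=
    ⟨Matrix.vecMul ![b0,b1,b2,b3] (Matrix.vandermonde s)⁻¹, by
      rw [Matrix.vecMul_vecMul, Matrix.nonsing_inv_mul _ hdet, Matrix.vecMul_one]⟩
  have g0 := congrFun hc 0
  have g1 := congrFun hc 1
  have g2 := congrFun hc 2
  have g3 := congrFun hc 3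
  simp [Matrix.vecMul, dotProduct, Matrix.vandermonde_apply, Fin.sum_univ_four] at g0 g1 g2 g3
  refine ⟨c, ?_⟩
  simp only [Fin.sum_univ_four]
  have r0 := hr 0
  have r1 := hr 1
  have r2 := hr 2
  have r3 := hr 3
  have g4 : b4 = c 0 * s 0 ^ 4 + c 1 * s 1 ^ 4 + c 2 * s 2 ^ 4 + c 3 * s 3 ^ 4 := by
    apply mul_left_cancel₀ hq
    linear_combination h1 - c 0 * r0 - c 1 * r1 - c 2 * r2 - c 3 * r3 + q1 * g3 + q2 * g2 + q3 * g1 + q4 * g0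
  refine ⟨g0.symm, g1.symm, g2.symm, g3.symm, g4, ?_⟩
  apply mul_left_cancel₀ hq
  linear_combination h2 - c 0 * s 0 * r0 - c 1 * s 1 * r1 - c 2 * s 2 * r2 - c 3 * s 3 * r3 - q1 * g4 + q2 * g3 + q3 * g2 + q4 * g1

/-- five roots give a factorization -/
lemma five_roots (e0 e1 e2 e3 e4 e5 : ℝ) (r : Fin 5 → ℝ) (hr : Function.Injective r)
    (h : ∀ j, e0 + e1 * r j + e2 * r j ^ 2 + e3 * r j ^ 3 + e4 * r j ^ 4 + e5 * r j ^ 5 = 0)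
    (X Y : ℝ) :
    e0 * X^5 + e1 * X^4 * Y + e2 * X^3 * Y^2 + e3 * X^2 * Y^3 + e4 * X * Y^4 + e5 * Y^5
      = e5 * ∏ j, (-r j * X + 1 * Y) := by
  have key : ∀ s : ℝ, e0 + e1 * s + e2 * s ^ 2 + e3 * s ^ 3 + e4 * s ^ 4 + e5 * s ^ 5
      = e5 * ∏ j, (s - r j) := by
    intro s
    let P : Polynomial ℝ := Polynomial.C e0 + Polynomial.C e1 * Polynomial.X +
      Polynomial.C e2 * Polynomial.X^2 + Polynomial.C e3 * Polynomial.X^3 +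
      Polynomial.C e4 * Polynomial.X^4 + Polynomial.C e5 * Polynomial.X^5
    let Q : Polynomial ℝ := Polynomial.C e5 * ∏ j, (Polynomial.X - Polynomial.C (r j))
    have hPQ : P = Q := by
      apply Polynomial.eq_of_degree_sub_lt_of_eval_index_eq (s := Finset.univ) (v := r) hr.injOn
      · rw [Finset.card_univ, Fintype.card_fin]
        have : P - Q = Polynomial.C (e0 + e5 * (r 0 * r 1 * r 2 * r 3 * r 4)) + 
            Polynomial.C (e1 - e5 * (r 0 * r 1 * r 2 * r 3 + r 0 * r 1 * r 2 * r 4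
              + r 0 * r 1 * r 3 * r 4 + r 0 * r 2 * r 3 * r 4 + r 1 * r 2 * r 3 * r 4))
              * Polynomial.X +
            Polynomial.C (e2 + e5 * (r 0 * r 1 * r 2 + r 0 * r 1 * r 3 + r 0 * r 1 * r 4
              + r 0 * r 2 * r 3 + r 0 * r 2 * r 4 + r 0 * r 3 * r 4 + r 1 * r 2 * r 3
              + r 1 * r 2 * r 4 + r 1 * r 3 * r 4 + r 2 * r 3 * r 4)) * Polynomial.X^2 +
            Polynomial.C (e3 - e5 * (r 0 * r 1 + r 0 * r 2 + r 0 * r 3 + r 0 * r 4 + r 1 * r 2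
              + r 1 * r 3 + r 1 * r 4 + r 2 * r 3 + r 2 * r 4 + r 3 * r 4)) * Polynomial.X^3 +
            Polynomial.C (e4 + e5 * (r 0 + r 1 + r 2 + r 3 + r 4)) * Polynomial.X^4 := by
          simp only [P, Q, Fin.prod_univ_five, map_add, map_sub, map_mul]
          ring
        rw [this]
        apply lt_of_le_of_lt (b := ((4:ℕ) : WithBot ℕ))
        · compute_degree!
        · norm_num
      · intro j _
        have : ∏ x, (r j - r x) = 0 := Finset.prod_eq_zero (Finset.mem_univ j) (sub_self _)
        simp [P, Q, Polynomial.eval_prod, this, h j]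
    have := congrArg (Polynomial.eval s) hPQ
    simpa [P, Q, Polynomial.eval_prod] using this
  by_cases hX : X = 0
  · subst hX; simp
  · have := key (Y / X)
    have h2 : ∀ j, -r j * X + 1 * Y = X * (Y / X - r j) := by intro j; field_simp; ring
    simp only [h2, Finset.prod_mul_distrib, Finset.prod_const, Finset.card_univ, Fintype.card_fin]
    calc _ = X^5 * (e0 + e1 * (Y/X) + e2 * (Y/X) ^ 2 + e3 * (Y/X) ^ 3 + e4 * (Y/X) ^ 4 + e5 * (Y/X) ^ 5) := by
          field_simp
      _ = _ := by rw [this]; ring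

lemma ivt_neg_pos (P : ℝ → ℝ) (hP : Continuous P) (a b : ℝ) (hab : a < b) (h : P a * P b < 0) :
    ∃ r, a < r ∧ r < b ∧ P r = 0 := by
  rcases mul_neg_iff.1 h with ⟨h1, h2⟩ | ⟨h1, h2⟩
  · obtain ⟨r, hr, hr0⟩ := intermediate_value_Ioo' hab.le hP.continuousOn
      (show (0:ℝ) ∈ Set.Ioo (P b) (P a) from ⟨h2, h1⟩)
    exact ⟨r, hr.1, hr.2, hr0⟩
  · obtain ⟨r, hr, hr0⟩ := intermediate_value_Ioo hab.le hP.continuousOn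
      (show (0:ℝ) ∈ Set.Ioo (P a) (P b) from ⟨h1, h2⟩)
    exact ⟨r, hr.1, hr.2, hr0⟩

/-- a quintic with nonzero leading coefficient takes the sign of its lead far out -/
lemma quintic_far (e0 e1 e2 e3 e4 e5 : ℝ) (h : e5 < 0) (L : ℝ) :
    (∃ s, L < s ∧ e0 + e1 * s + e2 * s ^ 2 + e3 * s ^ 3 + e4 * s ^ 4 + e5 * s ^ 5 < 0) ∧
    (∃ s, s < L ∧ 0 < e0 + e1 * s + e2 * s ^ 2 + e3 * s ^ 3 + e4 * s ^ 4 + e5 * s ^ 5) := by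
  obtain ⟨K, hK⟩ : ∃ K, K = |e0| + |e1| + |e2| + |e3| + |e4| := ⟨_, rfl⟩
  have hK0 : 0 ≤ K := by rw [hK]; positivity
  obtain ⟨R, hR⟩ : ∃ R, R = 1 + |L| + K / (-e5) := ⟨_, rfl⟩
  have h5 : 0 < -e5 := by linarith
  have hR1 : 1 ≤ R := by
    rw [hR]; have := abs_nonneg L; have : 0 ≤ K / (-e5) := by positivity
    linarith
  have hRL : |L| < R := by
    rw [hR]; have : 0 ≤ K / (-e5) := by positivity
    linarith
  have hRK : K < -e5 * R := by
    have h1 : K / (-e5) < R := by rw [hR]; have := abs_nonneg L; linarith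
    rw [div_lt_iff₀ h5] at h1; linarith
  have hlt := abs_lt.1 hRL
  have p1 : R ≤ R^4 := by nlinarith [pow_le_pow_right₀ hR1 (show 1 ≤ 4 by norm_num)]
  have p0 : 1 ≤ R^4 := by linarith
  have p2 : R^2 ≤ R^4 := pow_le_pow_right₀ hR1 (by norm_num)
  have p3 : R^3 ≤ R^4 := pow_le_pow_right₀ hR1 (by norm_num)
  have p5 : K * R^4 < -e5 * R^5 := by
    have : 0 < R^4 := by positivity
    nlinarith
  have b : ∀ e m : ℝ, 0 ≤ m → m ≤ R^4 → e * m ≤ |e| * R^4 ∧ -(|e| * R^4) ≤ e * m := by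
    intro e m hm hm'
    have h1 : |e * m| ≤ |e| * R^4 := by
      rw [abs_mul, abs_of_nonneg hm]; gcongr
    exact ⟨(abs_le.1 h1).2, (abs_le.1 h1).1⟩
  have b0 := b e0 1 (by norm_num) p0
  have b1 := b e1 R (by linarith) p1
  have b2 := b e2 (R^2) (by positivity) p2
  have b3 := b e3 (R^3) (by positivity) p3
  have b4 := b e4 (R^4) (by positivity) le_rfl
  have hKR : K * R^4 = |e0| * R^4 + |e1| * R^4 + |e2| * R^4 + |e3| * R^4 + |e4| * R^4 := by
    rw [hK]; ring
  refine ⟨⟨R, by linarith, ?_⟩, ⟨-R, by linarith, ?_⟩⟩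
  · linarith [b0.1, b1.1, b2.1, b3.1, b4.1]
  · have : e0 + e1 * (-R) + e2 * (-R) ^ 2 + e3 * (-R) ^ 3 + e4 * (-R) ^ 4 + e5 * (-R) ^ 5
       = e0 - e1 * R + e2 * R^2 - e3 * R^3 + e4 * R^4 - e5 * R^5 := by ring
    rw [this]
    linarith [b0.2, b1.1, b2.2, b3.1, b4.2]

lemma strict5 (r0 r1 r2 r3 r4 : ℝ) (h0 : r0 < r1) (h1 : r1 < r2) (h2 : r2 < r3) (h3 : r3 < r4) :
    Function.Injective ![r0, r1, r2, r3, r4] := by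
  apply StrictMono.injective
  rw [Fin.strictMono_iff_lt_succ]
  intro i
  fin_cases i <;> simp <;> assumption

lemma case_split (f : MvPolynomial (Fin 2) ℝ) (ρ x1 x2 y1 y2 a c s : ℝ) (hρ : ρ ≠ 0)
    (hdet : x1 * y2 - x2 * y1 ≠ 0) (ha : 0 ≤ a) (hs : 0 ≤ s) (hsc : s ≤ c) (hcs : c^2 + s^2 = 1)
    (hlt : a * c^4 < 1)
    (hf : ∀ x y : ℝ, eval ![x, y] f = ρ * NF a c s (x1 * x + x2 * y) (y1 * x + y2 * y)) :
    SplitsDistinct f 5 := by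
  have hc : 0 < c := by nlinarith
  rcases hs.eq_or_lt with hs0 | hs0
  · -- s = 0
    subst hs0
    have hc1 : c = 1 := by nlinarith
    subst hc1
    obtain ⟨w, hw⟩ : ∃ w, w = √((4 + a) / 5) := ⟨_, rfl⟩
    have hw2 : w^2 = (4 + a) / 5 := by rw [hw]; exact Real.sq_sqrt (by positivity)
    have hw0 : 0 < w := by rw [hw]; positivity
    have hw1 : w < 1 := by nlinarith
    obtain ⟨m, hm⟩ : ∃ m, m = √(1 - w) := ⟨_, rfl⟩
    obtain ⟨n, hn⟩ : ∃ n, n = √(1 + w) := ⟨_, rfl⟩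
    have hm2 : m^2 = 1 - w := by rw [hm]; exact Real.sq_sqrt (by linarith)
    have hn2 : n^2 = 1 + w := by rw [hn]; exact Real.sq_sqrt (by linarith)
    have hm0 : 0 < m := by rw [hm]; apply Real.sqrt_pos.2; linarith
    have hmn : m < n := by rw [hm, hn]; apply Real.sqrt_lt_sqrt <;> linarith
    refine splits_of f (-5 * ρ) x1 x2 y1 y2 (by simpa using hρ) hdet ![1, m, -m, n, -n] ![0,1,1,1,1] ?_ ?_
    · intro i j hij
      fin_cases i <;> fin_cases j <;> simp at hij ⊢ <;> first | linarith | (intro h; linarith)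
    · intro x y
      rw [hf]
      simp only [NF, Fin.prod_univ_five, Matrix.cons_val]
      have ha' : a = 5 * w^2 - 4 := by linarith
      rw [ha']
      generalize x1 * x + x2 * y = X
      generalize y1 * x + y2 * y = Y
      have e1 : (m * X + 1 * Y) * (-m * X + 1 * Y) = Y^2 - (1-w) * X^2 := by rw [← hm2]; ring
      have e2 : (n * X + 1 * Y) * (-n * X + 1 * Y) = Y^2 - (1+w) * X^2 := by rw [← hn2]; ring
      linear_combination 5 * ρ * X * (n * X + 1 * Y) * (-n * X + 1 * Y) * e1 
        + 5 * ρ * X * (Y^2 - (1-w) * X^2) * e2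
  rcases hsc.eq_or_lt with hsc0 | hsc0
  · -- s = c
    subst hsc0
    have hc2 : s^2 = 1/2 := by linarith
    have hc4 : s^4 = 1/4 := by rw [show s^4 = (s^2)^2 by ring, hc2]; norm_num
    obtain ⟨w, hw⟩ : ∃ w, w = √((4 - a) / 5) := ⟨_, rfl⟩
    have hw2 : w^2 = (4 - a) / 5 := by rw [hw]; exact Real.sq_sqrt (by rw [hc4] at hlt; linarith)
    have hw0 : 0 < w := by rw [hw]; apply Real.sqrt_pos.2; rw [hc4] at hlt; linarith
    have hw1 : w < 1 := by nlinarith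
    obtain ⟨m, hm⟩ : ∃ m, m = √(1 - w) := ⟨_, rfl⟩
    obtain ⟨n, hn⟩ : ∃ n, n = √(1 + w) := ⟨_, rfl⟩
    have hm2 : m^2 = 1 - w := by rw [hm]; exact Real.sq_sqrt (by linarith)
    have hn2 : n^2 = 1 + w := by rw [hn]; exact Real.sq_sqrt (by linarith)
    have hm0 : 0 < m := by rw [hm]; apply Real.sqrt_pos.2; linarith
    have hmn : m < n := by rw [hm, hn]; apply Real.sqrt_lt_sqrt <;> linarith
    refine splits_of f (5 * ρ) x1 x2 y1 y2 (by simpa using hρ) hdet ![1, m, -m, n, -n] ![0,1,1,1,1] ?_ ?_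
    · intro i j hij
      fin_cases i <;> fin_cases j <;> simp at hij ⊢ <;> first | linarith | (intro h; linarith)
    · intro x y
      rw [hf]
      simp only [NF, Fin.prod_univ_five, Matrix.cons_val]
      have ha' : a = 4 - 5 * w^2 := by linarith
      rw [ha']
      generalize x1 * x + x2 * y = X
      generalize y1 * x + y2 * y = Y
      have e1 : (m * X + 1 * Y) * (-m * X + 1 * Y) = Y^2 - (1-w) * X^2 := by rw [← hm2]; ring
      have e2 : (n * X + 1 * Y) * (-n * X + 1 * Y) = Y^2 - (1+w) * X^2 := by rw [← hn2]; ring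
      have e3 : s^4 - 6 * s^2 * s^2 + s^4 = -1 := by rw [hc2, hc4]; norm_num
      rw [e3]
      linear_combination -5 * ρ * X * (n * X + 1 * Y) * (-n * X + 1 * Y) * e1 
        - 5 * ρ * X * (Y^2 - (1-w) * X^2) * e2
  -- general case
  obtain ⟨E, hE⟩ : ∃ E, E = c^4 - 6*c^2*s^2 + s^4 := ⟨_, rfl⟩
  obtain ⟨D, hD⟩ : ∃ D, D = 4*c^3*s - 4*c*s^3 := ⟨_, rfl⟩
  have hD0 : 0 < D := by
    have : D = 4 * c * s * ((c - s) * (c + s)) := by rw [hD]; ring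
    rw [this]
    have : 0 < c - s := by linarith
    positivity
  let P : ℝ → ℝ := fun u => (a - E) + (-5*D) * u + (10*E) * u^2 + (10*D) * u^3 + (-5*E) * u^4 + (-D) * u^5
  have hPc : Continuous P := by fun_prop
  have hom : ∀ X Y, X ≠ 0 → X^5 * P (Y / X) = NF a c s X Y := by
    intro X Y hX
    simp only [P, NF, ← hE, ← hD]
    field_simp
    ring
  have n1 : NF a c s s (-c) = s * (a * s^4 - 1) := by
    have : NF a c s s (-c) = a * s^5 - s * (c^2+s^2)^4 := by simp only [NF]; ring
    rw [this, hcs]; ring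
  have n2 : NF a c s (c+s) (s-c) = (c+s) * (a * (c+s)^4 + 4) := by
    have : NF a c s (c+s) (s-c) = a * (c+s)^5 + 4 * (c+s) * (c^2+s^2)^4 := by simp only [NF]; ring
    rw [this, hcs]; ring
  have n3 : NF a c s c s = c * (a * c^4 - 1) := by
    have : NF a c s c s = a * c^5 - c * (c^2+s^2)^4 := by simp only [NF]; ring
    rw [this, hcs]; ring
  have n4 : NF a c s (c-s) (s+c) = (c-s) * (a * (c-s)^4 + 4) := by
    have : NF a c s (c-s) (s+c) = a * (c-s)^5 + 4 * (c-s) * (c^2+s^2)^4 := by simp only [NF]; ring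
    rw [this, hcs]; ring
  have hcms : 0 < c - s := by linarith
  have hs4 : a * s^4 < 1 := by
    have : s^4 ≤ c^4 := by gcongr
    nlinarith
  have q1 : P (-c / s) < 0 := by
    have h := hom s (-c) hs0.ne'
    rw [n1] at h
    have : s * (a * s^4 - 1) < 0 := mul_neg_of_pos_of_neg hs0 (by linarith)
    rw [← h] at this
    exact (pos_iff_neg_of_mul_neg this).1 (by positivity)
  have q2 : 0 < P ((s-c) / (c+s)) := by
    have h := hom (c+s) (s-c) (by positivity)
    rw [n2] at h
    have : 0 < (c+s) * (a * (c+s)^4 + 4) := by positivity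
    rw [← h] at this
    exact (mul_pos_iff_of_pos_left (by positivity)).1 this
  have q3 : P (s / c) < 0 := by
    have h := hom c s hc.ne'
    rw [n3] at h
    have : c * (a * c^4 - 1) < 0 := mul_neg_of_pos_of_neg hc (by linarith)
    rw [← h] at this
    exact (pos_iff_neg_of_mul_neg this).1 (by positivity)
  have q4 : 0 < P ((s+c) / (c-s)) := by
    have h := hom (c-s) (s+c) hcms.ne'
    rw [n4] at h
    have : 0 < (c-s) * (a * (c-s)^4 + 4) := by positivity
    rw [← h] at this
    exact (mul_pos_iff_of_pos_left (by positivity)).1 this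
  have o1 : -c / s < (s-c) / (c+s) := by
    rw [div_lt_div_iff₀ hs0 (by positivity)]; nlinarith
  have o2 : (s-c) / (c+s) < s / c := by
    rw [div_lt_div_iff₀ (by positivity) hc]; nlinarith
  have o3 : s / c < (s+c) / (c-s) := by
    rw [div_lt_div_iff₀ hc hcms]; nlinarith
  obtain ⟨⟨u5, hu5, q5⟩, -⟩ := quintic_far (a - E) (-5*D) (10*E) (10*D) (-5*E) (-D) (by linarith) ((s+c) / (c-s))
  obtain ⟨-, ⟨u0, hu0, q0⟩⟩ := quintic_far (a - E) (-5*D) (10*E) (10*D) (-5*E) (-D) (by linarith) (-c / s)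
  obtain ⟨r0, l0, l0', z0⟩ := ivt_neg_pos P hPc _ _ hu0 (mul_neg_of_pos_of_neg q0 q1)
  obtain ⟨r1, l1, l1', z1⟩ := ivt_neg_pos P hPc _ _ o1 (mul_neg_of_neg_of_pos q1 q2)
  obtain ⟨r2, l2, l2', z2⟩ := ivt_neg_pos P hPc _ _ o2 (mul_neg_of_pos_of_neg q2 q3)
  obtain ⟨r3, l3, l3', z3⟩ := ivt_neg_pos P hPc _ _ o3 (mul_neg_of_neg_of_pos q3 q4)
  obtain ⟨r4, l4, l4', z4⟩ := ivt_neg_pos P hPc _ _ hu5 (mul_neg_of_pos_of_neg q4 q5)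
  have inj := strict5 r0 r1 r2 r3 r4 (by linarith) (by linarith) (by linarith) (by linarith)
  refine splits_of f (ρ * (-D)) x1 x2 y1 y2 (mul_ne_zero hρ (by linarith)) hdet
    (fun j => -(![r0, r1, r2, r3, r4] j)) (fun _ => 1) ?_ ?_
  · intro i j hij h
    apply hij
    apply inj
    linarith
  · intro x y
    rw [hf, mul_assoc, ← five_roots (a - E) (-5*D) (10*E) (10*D) (-5*E) (-D) _ inj ?_]
    · simp only [NF, ← hE, ← hD]; ring
    · intro j
      fin_cases j
      · exact z0
      · exact z1
      · exact z2
      · exact z3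
      · exact z4

lemma case_eq (f : MvPolynomial (Fin 2) ℝ) (ρ x1 x2 y1 y2 a c s : ℝ)
    (hcs : c^2 + s^2 = 1) (heq : a * c^4 = 1)
    (hf : ∀ x y : ℝ, eval ![x, y] f = ρ * NF a c s (x1 * x + x2 * y) (y1 * x + y2 * y)) :
    ¬ SquarefreeC f := by
  let U := lin (c * x1 + s * y1) (c * x2 + s * y2)
  let V := lin (c * y1 - s * x1) (c * y2 - s * x2)
  refine nsf_of f (C ρ * (C (10*a*c^3*s^2 + 10*c) * U^3 - C (10*a*c^2*s^3 + 10*s) * U^2 * V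
    + C (5*a*c*s^4 - 5*c) * U * V^2 + C (s - a * s^5) * V^3)) (c * y1 - s * x1) (c * y2 - s * x2) ?_
  intro x y
  rw [hf]
  simp only [U, V, lin, map_mul, map_add, map_sub, map_pow, eval_C, eval_X]
  simp only [Matrix.cons_val_zero, Matrix.cons_val_one]
  obtain ⟨X, hX⟩ : ∃ X, X = x1 * x + x2 * y := ⟨_, rfl⟩
  obtain ⟨Y, hY⟩ : ∃ Y, Y = y1 * x + y2 * y := ⟨_, rfl⟩
  obtain ⟨u, hu⟩ : ∃ u, u = c * X + s * Y := ⟨_, rfl⟩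
  obtain ⟨v, hv⟩ : ∃ v, v = c * Y - s * X := ⟨_, rfl⟩
  have e1 : (c * x1 + s * y1) * x + (c * x2 + s * y2) * y = u := by rw [hu, hX, hY]; ring
  have e2 : (c * y1 - s * x1) * x + (c * y2 - s * x2) * y = v := by rw [hv, hX, hY]; ring
  rw [e1, e2, ← hX, ← hY]
  have hX' : X = c * u - s * v := by rw [hu, hv]; linear_combination - X * hcs
  have hY' : Y = s * u + c * v := by rw [hu, hv]; linear_combination - Y * hcs
  rw [hX', hY']
  have : NF a c s (c * u - s * v) (s * u + c * v) = a * (c * u - s * v)^5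
      - (c^2+s^2)^4 * (c * (u^5 - 10*u^3*v^2 + 5*u*v^4) - s * (5*u^4*v - 10*u^2*v^3+v^5)) := by
    simp only [NF]; ring
  rw [this, hcs]
  linear_combination ρ * (c * u^5 - 5 * s * u^4 * v) * heq


lemma case_dec (f : MvPolynomial (Fin 2) ℝ) (ρ x1 x2 y1 y2 a c s : ℝ)
    (hdet : x1 * y2 - x2 * y1 ≠ 0) (ha : 0 ≤ a) (hc : 0 < c) (hcs : c^2 + s^2 = 1)
    (hlt : 1 < a * c^4)
    (hf : ∀ x y : ℝ, eval ![x, y] f = ρ * NF a c s (x1 * x + x2 * y) (y1 * x + y2 * y)) :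
    HasDecomp f 5 4 := by
  obtain ⟨m, hm⟩ : ∃ m, m = a * c^4 - 1 := ⟨_, rfl⟩
  obtain ⟨n, hn⟩ : ∃ n, n = a * c^2 * s^2 + 1 := ⟨_, rfl⟩
  have hm0 : 0 < m := by linarith
  have hn0 : 0 < n := by rw [hn]; positivity
  obtain ⟨k, hk⟩ : ∃ k, k = √(m / n) := ⟨_, rfl⟩
  have hk0 : 0 < k := by rw [hk]; positivity
  have hk2 : n * k^2 = m := by rw [hk, Real.sq_sqrt (by positivity)]; field_simp
  -- small ε
  obtain ⟨ε, hε, g1, g2, g3, g4⟩ : ∃ ε : ℝ, 0 < ε ∧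
      0 < (-2*k) * (m - n * (-2*k)^2) + ε * ((1 + (-2*k)^2) * (s * (-2*k) + c)) ∧
      (-k/2) * (m - n * (-k/2)^2) + ε * ((1 + (-k/2)^2) * (s * (-k/2) + c)) < 0 ∧
      0 < (k/2) * (m - n * (k/2)^2) + ε * ((1 + (k/2)^2) * (s * (k/2) + c)) ∧
      (2*k) * (m - n * (2*k)^2) + ε * ((1 + (2*k)^2) * (s * (2*k) + c)) < 0 ∧ -n + ε * s < 0 := by
    have sm : ∀ A B : ℝ, A < 0 → ∀ᶠ ε in nhdsWithin (0:ℝ) (Set.Ioi 0), A + ε * B < 0 := by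
      intro A B hA
      apply Filter.Eventually.filter_mono nhdsWithin_le_nhds
      have hc : Continuous (fun ε : ℝ => A + ε * B) := by fun_prop
      exact hc.continuousAt.eventually_lt continuousAt_const (by simpa using hA)
    have hkm : 0 < k * m := by positivity
    have s1 := sm (-((-2*k) * (m - n * (-2*k)^2))) (-((1 + (-2*k)^2) * (s * (-2*k) + c)))
      (by rw [← hk2] at hkm ⊢; nlinarith)
    have s2 := sm ((-k/2) * (m - n * (-k/2)^2)) ((1 + (-k/2)^2) * (s * (-k/2) + c))
      (by rw [← hk2] at hkm ⊢; nlinarith)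
    have s3 := sm (-((k/2) * (m - n * (k/2)^2))) (-((1 + (k/2)^2) * (s * (k/2) + c)))
      (by rw [← hk2] at hkm ⊢; nlinarith)
    have s4 := sm ((2*k) * (m - n * (2*k)^2)) ((1 + (2*k)^2) * (s * (2*k) + c))
      (by rw [← hk2] at hkm ⊢; nlinarith)
    have s5 := sm (-n) s (by linarith)
    obtain ⟨ε, ⟨⟨⟨⟨⟨h1, h2⟩, h3⟩, h4⟩, h5⟩, h6⟩⟩ :=
      (((((s1.and s2).and s3).and s4).and s5).and self_mem_nhdsWithin).exists
    exact ⟨ε, h6, by linarith, h2, by linarith, h4, h5⟩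
  obtain ⟨g4, g5⟩ := g4
  let R : ℝ → ℝ := fun w => w * (m - n * w^2) + ε * ((1 + w^2) * (s * w + c))
  have hR : Continuous R := by fun_prop
  have hR0 : 0 < R 0 := by simp only [R]; simp; positivity
  obtain ⟨ra, la, la', za⟩ := ivt_neg_pos R hR (-2*k) (-k/2) (by linarith) (mul_neg_of_pos_of_neg g1 g2)
  obtain ⟨rb, lb, lb', zb⟩ := ivt_neg_pos R hR (-k/2) 0 (by linarith) (mul_neg_of_neg_of_pos g2 hR0)
  obtain ⟨rc, lc, lc', zc⟩ := ivt_neg_pos R hR (k/2) (2*k) (by linarith) (mul_neg_of_pos_of_neg g3 g4)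
  simp only [R] at za zb zc
  have inj : Function.Injective ![ra, rb, 0, rc] := by
    apply StrictMono.injective
    rw [Fin.strictMono_iff_lt_succ]
    intro i
    fin_cases i <;> simp <;> linarith
  obtain ⟨d, d0, d1, d2, d3, d4, d5⟩ := vand ![ra, rb, 0, rc] inj (-n + ε * s) (ε * c) (m + ε * s) (ε * c) 0
    g5.ne (by
      intro j
      fin_cases j
      · simp; linear_combination ra * za
      · simp; linear_combination rb * zb
      · simp
      · simp; linear_combination rc * zc)
    (s - a * s^5) (a * c * s^4 - c) (-s * n) (c * n) (-s * m) (c * m)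
    (by rw [hm, hn]; ring)
    (by rw [hm, hn]; ring)
  refine decomp_of f ρ x1 x2 y1 y2 hdet d (fun j => ![ra, rb, 0, rc] j * c - s)
    (fun j => ![ra, rb, 0, rc] j * s + c) ?_ ?_
  · intro j h
    simp only [Prod.mk.injEq] at h
    have : c^2 + s^2 = 0 := by linear_combination c * h.2 - s * h.1
    linarith
  · intro x y
    rw [hf]
    congr 1
    obtain ⟨X, hX⟩ : ∃ X, X = x1 * x + x2 * y := ⟨_, rfl⟩
    obtain ⟨Y, hY⟩ : ∃ Y, Y = y1 * x + y2 * y := ⟨_, rfl⟩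
    obtain ⟨u, hu⟩ : ∃ u, u = c * X + s * Y := ⟨_, rfl⟩
    obtain ⟨v, hv⟩ : ∃ v, v = c * Y - s * X := ⟨_, rfl⟩
    rw [← hX, ← hY]
    have hX' : X = c * u - s * v := by rw [hu, hv]; linear_combination - X * hcs
    have hY' : Y = s * u + c * v := by rw [hu, hv]; linear_combination - Y * hcs
    have this : NF a c s (c * u - s * v) (s * u + c * v) = a * (c * u - s * v)^5
        - (c^2+s^2)^4 * (c * (u^5 - 10*u^3*v^2 + 5*u*v^4) - s * (5*u^4*v - 10*u^2*v^3+v^5)) := by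
      simp only [NF]; ring
    have e : ∀ w : ℝ, (w * c - s) * X + (w * s + c) * Y = w * u + v := by
      intro w; rw [hu, hv]; ring
    simp only [e]
    rw [hX', hY', this, hcs]
    generalize ![ra, rb, 0, rc] = w at *
    have e2 : ∑ j, d j * (w j * u + v)^5 = (∑ j, d j * w j ^ 5) * u^5
        + 5 * (∑ j, d j * w j ^ 4) * u^4 * v + 10 * (∑ j, d j * w j ^ 3) * u^3 * v^2
        + 10 * (∑ j, d j * w j ^ 2) * u^2 * v^3 + 5 * (∑ j, d j * w j) * u * v^4
        + (∑ j, d j) * v^5 := by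
      simp only [Fin.sum_univ_four]; ring
    rw [e2, ← d0, ← d1, ← d2, ← d3, ← d4, ← d5, hm, hn]
    ring

lemma m1 (f : MvPolynomial (Fin 2) ℝ) (hsf : SquarefreeC f) (h5 : ¬ SplitsDistinct f 5)
    (ρ x1 x2 y1 y2 a c s : ℝ) (hρ : ρ ≠ 0)
    (hdet : x1 * y2 - x2 * y1 ≠ 0) (ha : 0 ≤ a) (hs : 0 ≤ s) (hsc : s ≤ c) (hcs : c^2 + s^2 = 1)
    (hf : ∀ x y : ℝ, eval ![x, y] f = ρ * NF a c s (x1 * x + x2 * y) (y1 * x + y2 * y)) :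
    HasDecomp f 5 4 := by
  rcases lt_trichotomy (a * c^4) 1 with h | h | h
  · exact absurd (case_split f ρ x1 x2 y1 y2 a c s hρ hdet ha hs hsc hcs h hf) h5
  · exact absurd hsf (case_eq f ρ x1 x2 y1 y2 a c s hcs h hf)
  · exact case_dec f ρ x1 x2 y1 y2 a c s hdet ha (by nlinarith) hcs h hf

lemma m2 (f : MvPolynomial (Fin 2) ℝ) (hsf : SquarefreeC f) (h5 : ¬ SplitsDistinct f 5)
    (ρ x1 x2 y1 y2 a c s : ℝ) (hρ : ρ ≠ 0)
    (hdet : x1 * y2 - x2 * y1 ≠ 0) (ha : 0 ≤ a) (hs : 0 ≤ s) (hc : 0 ≤ c) (hcs : c^2 + s^2 = 1)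
    (hf : ∀ x y : ℝ, eval ![x, y] f = ρ * NF a c s (x1 * x + x2 * y) (y1 * x + y2 * y)) :
    HasDecomp f 5 4 := by
  rcases le_total s c with h | h
  · exact m1 f hsf h5 ρ x1 x2 y1 y2 a c s hρ hdet ha hs h hcs hf
  · refine m1 f hsf h5 ρ x1 x2 (-y1) (-y2) a s c hρ ?_ ha hc h (by linarith) ?_
    · intro h; apply hdet; linarith
    · intro x y; rw [hf]; simp only [NF]; ring

lemma m3 (f : MvPolynomial (Fin 2) ℝ) (hsf : SquarefreeC f) (h5 : ¬ SplitsDistinct f 5)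
    (ρ x1 x2 y1 y2 a c s : ℝ) (hρ : ρ ≠ 0)
    (hdet : x1 * y2 - x2 * y1 ≠ 0) (ha : 0 ≤ a) (hs : 0 ≤ s) (hcs : c^2 + s^2 = 1)
    (hf : ∀ x y : ℝ, eval ![x, y] f = ρ * NF a c s (x1 * x + x2 * y) (y1 * x + y2 * y)) :
    HasDecomp f 5 4 := by
  rcases le_total 0 c with h | h
  · exact m2 f hsf h5 ρ x1 x2 y1 y2 a c s hρ hdet ha hs h hcs hf
  · refine m2 f hsf h5 ρ x1 x2 (-y1) (-y2) a (-c) s hρ ?_ ha hs (by linarith) (by linarith) ?_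
    · intro h; apply hdet; linarith
    · intro x y; rw [hf]; simp only [NF]; ring

lemma m4 (f : MvPolynomial (Fin 2) ℝ) (hsf : SquarefreeC f) (h5 : ¬ SplitsDistinct f 5)
    (ρ x1 x2 y1 y2 a c s : ℝ) (hρ : ρ ≠ 0)
    (hdet : x1 * y2 - x2 * y1 ≠ 0) (ha : 0 ≤ a) (hcs : c^2 + s^2 = 1)
    (hf : ∀ x y : ℝ, eval ![x, y] f = ρ * NF a c s (x1 * x + x2 * y) (y1 * x + y2 * y)) :
    HasDecomp f 5 4 := by
  rcases le_total 0 s with h | h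
  · exact m3 f hsf h5 ρ x1 x2 y1 y2 a c s hρ hdet ha h hcs hf
  · refine m3 f hsf h5 ρ x1 x2 (-y1) (-y2) a c (-s) hρ ?_ ha (by linarith) (by linarith) ?_
    · intro h; apply hdet; linarith
    · intro x y; rw [hf]; simp only [NF]; ring

lemma omega_exists (A B ρ : ℝ) (h : A^2 + B^2 = ρ^2) (hρ : ρ ≠ 0) :
    ∃ c s : ℝ, c^2 + s^2 = 1 ∧ ρ * (c^4 - 6*c^2*s^2 + s^4) = -A ∧ ρ * (4*c^3*s - 4*c*s^3) = B := by
  obtain ⟨w, hw⟩ := IsAlgClosed.exists_pow_nat_eq (⟨-A/ρ, B/ρ⟩ : ℂ) (n := 4) (by norm_num)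
  have hre := congrArg Complex.re hw
  have him := congrArg Complex.im hw
  have e1 : (w^4).re = w.re^4 - 6*w.re^2*w.im^2 + w.im^4 := by
    simp [pow_succ, Complex.mul_re, Complex.mul_im]; ring
  have e2 : (w^4).im = 4*w.re^3*w.im - 4*w.re*w.im^3 := by
    simp [pow_succ, Complex.mul_re, Complex.mul_im]; ring
  rw [e1] at hre
  rw [e2] at him
  simp only at hre him
  refine ⟨w.re, w.im, ?_, ?_, ?_⟩
  · have h4 : (w.re^2 + w.im^2)^4 = 1 := by
      have : (w.re^2 + w.im^2)^4 = (-A/ρ)^2 + (B/ρ)^2 := by rw [← hre, ← him]; ring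
      rw [this]; field_simp; linarith
    exact (pow_eq_one_iff_of_nonneg (by positivity) (by norm_num)).1 h4
  · rw [hre]; field_simp
  · rw [him]; field_simp

lemma upper (α₀ α₁ α₂ α₃ α₄ α₅ t p q : ℝ) (hq : q ≠ 0)
    (h2 : α₂ = (t + 2 * p) * α₃ - (2 * p * t + p^2 + q^2) * α₄ + t * (p^2 + q^2) * α₅)
    (h1 : α₁ = (t + 2 * p) * α₂ - (2 * p * t + p^2 + q^2) * α₃ + t * (p^2 + q^2) * α₄)
    (h0 : α₀ = (t + 2 * p) * α₁ - (2 * p * t + p^2 + q^2) * α₂ + t * (p^2 + q^2) * α₃)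
    (f : MvPolynomial (Fin 2) ℝ) (hsf : SquarefreeC f) (h5 : ¬ SplitsDistinct f 5)
    (hf : ∀ x y : ℝ, eval ![x, y] f = α₀ * x ^ 5 + 5 * α₁ * x ^ 4 * y + 10 * α₂ * x ^ 3 * y ^ 2
      + 10 * α₃ * x ^ 2 * y ^ 3 + 5 * α₄ * x * y ^ 4 + α₅ * y ^ 5) : HasDecomp f 5 4 := by
  obtain ⟨c0, u, v, k5, k4, k3⟩ : ∃ c0 u v : ℝ, α₅ = c0 + u ∧ α₄ = c0 * t + u * p - v * q ∧
      α₃ = c0 * t^2 + u * (p^2 - q^2) - v * (2 * p * q) := by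
    have hD : (t-p)^2 + q^2 ≠ 0 := by positivity
    obtain ⟨c0, hc0⟩ : ∃ c0, c0 * ((t-p)^2 + q^2) = α₃ - 2 * p * α₄ + (p^2+q^2) * α₅ :=
      ⟨_, div_mul_cancel₀ _ hD⟩
    obtain ⟨v, hv⟩ : ∃ v, v * q = c0 * t + (α₅ - c0) * p - α₄ := ⟨_, div_mul_cancel₀ _ hq⟩
    refine ⟨c0, α₅ - c0, v, by ring, by linarith, ?_⟩
    linear_combination 2 * p * hv - hc0
  have hf2 : ∀ x y : ℝ, eval ![x, y] f = c0 * (t * x + y)^5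
      + u * ((p*x+y)^5 - 10*(p*x+y)^3*(q*x)^2 + 5*(p*x+y)*(q*x)^4)
      - v * (5*(p*x+y)^4*(q*x) - 10*(p*x+y)^2*(q*x)^3 + (q*x)^5) := by
    intro x y
    rw [hf, h0, h1, h2, k3, k4, k5]; ring
  obtain ⟨k, hk⟩ : ∃ k, k * q = p - t := ⟨_, div_mul_cancel₀ _ hq⟩
  have hk1 : 1 + k^2 ≠ 0 := by positivity
  obtain ⟨g, hg⟩ : ∃ g, g * (1 + k^2) = 1 := ⟨_, div_mul_cancel₀ _ hk1⟩
  obtain ⟨h, hh⟩ : ∃ h, h = -k * g := ⟨_, rfl⟩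
  obtain ⟨A, hA⟩ : ∃ A, A = u * (g^5 - 10*g^3*h^2 + 5*g*h^4) - v * (5*g^4*h - 10*g^2*h^3 + h^5) :=
    ⟨_, rfl⟩
  obtain ⟨B, hB⟩ : ∃ B, B = v * (g^5 - 10*g^3*h^2 + 5*g*h^4) + u * (5*g^4*h - 10*g^2*h^3 + h^5) :=
    ⟨_, rfl⟩
  have hf3 : ∀ x y : ℝ, eval ![x, y] f = c0 * (t * x + 1 * y)^5
      + A * ((t * x + 1 * y)^5 - 10*(t * x + 1 * y)^3*((q+k*p)*x+k*y)^2
        + 5*(t * x + 1 * y)*((q+k*p)*x+k*y)^4)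
      - B * (5*(t * x + 1 * y)^4*((q+k*p)*x+k*y) - 10*(t * x + 1 * y)^2*((q+k*p)*x+k*y)^3
        + ((q+k*p)*x+k*y)^5) := by
    intro x y
    rw [hf2]
    obtain ⟨X, hX⟩ : ∃ X, X = t * x + y := ⟨_, rfl⟩
    obtain ⟨Y, hY⟩ : ∃ Y, Y = (q+k*p)*x+k*y := ⟨_, rfl⟩
    have e1 : p * x + y = g * X - h * Y := by
      rw [hh, hX, hY]
      linear_combination (-(p * x + y)) * hg - g * x * hk
    have e2 : q * x = g * Y + h * X := by
      rw [hh, hX, hY]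
      linear_combination (-(q * x)) * hg + g * k * x * hk
    rw [e1, e2, one_mul, ← hX, ← hY, hA, hB]
    ring
  have hdet : t * k - 1 * (q + k * p) ≠ 0 := by
    intro h
    have : q^2 + (p-t)^2 = 0 := by rw [← hk]; linear_combination -q * h + k * q * hk
    have : 0 < q^2 + (p-t)^2 := by positivity
    linarith
  have hAB : 0 < A^2 + B^2 := by
    by_contra hn
    have hA0 : A = 0 := by nlinarith [sq_nonneg A, sq_nonneg B]
    have hB0 : B = 0 := by nlinarith [sq_nonneg A, sq_nonneg B]
    refine nsf_of f (C c0 * lin t 1 ^ 3) t 1 ?_ hsf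
    intro x y
    rw [hf3, hA0, hB0]
    simp [lin]
    ring
  obtain ⟨ρ, hρ, hρ2, hρc⟩ : ∃ ρ : ℝ, ρ ≠ 0 ∧ A^2 + B^2 = ρ^2 ∧ 0 ≤ c0 / ρ := by
    have hs := Real.sq_sqrt hAB.le
    have hp := Real.sqrt_pos.2 hAB
    rcases le_total 0 c0 with h | h
    · exact ⟨√(A^2+B^2), hp.ne', hs.symm, by positivity⟩
    · exact ⟨-√(A^2+B^2), by linarith, by rw [neg_sq, hs], div_nonneg_of_nonpos h (by linarith)⟩
  obtain ⟨c, s, hcs, hc1, hc2⟩ := omega_exists A B ρ hρ2 hρ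
  refine m4 f hsf h5 ρ t 1 (q + k * p) k (c0/ρ) c s hρ hdet hρc hcs ?_
  intro x y
  rw [hf3]
  have : ρ * (c0 / ρ) = c0 := by field_simp
  simp only [NF]
  generalize t * x + 1 * y = X
  generalize (q+k*p)*x+k*y = Y
  linear_combination (-X^5) * this + (X^5 - 10*X^3*Y^2 + 5*X*Y^4) * hc1
    + (5*X^4*Y - 10*X^2*Y^3 + Y^5) * hc2

/-- rank-4 criterion for quintics. If `f` does not have five real
roots, its Hankel matrix has rank 3, and the cubic `g` of `3×3` minors has degree 3
with exactly one real root `t` and a pair of distinct complex conjugate roots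
`z, z̄`, then the real rank of `f` is 4. -/
theorem stmt19 (α₀ α₁ α₂ α₃ α₄ α₅ : ℝ) (f : MvPolynomial (Fin 2) ℝ)
    (hf : f = C α₀ * X 0 ^ 5 + C (5 * α₁) * X 0 ^ 4 * X 1 +
      C (10 * α₂) * X 0 ^ 3 * X 1 ^ 2 + C (10 * α₃) * X 0 ^ 2 * X 1 ^ 3 +
      C (5 * α₄) * X 0 * X 1 ^ 4 + C α₅ * X 1 ^ 5)
    (hsf : SquarefreeC f)
    (hnot5 : ¬ SplitsDistinct f 5)
    (hrk : (!![α₀, α₁, α₂, α₃; α₁, α₂, α₃, α₄; α₂, α₃, α₄, α₅]).rank = 3)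
    (g : Polynomial ℝ)
    (hg : g = Polynomial.C (!![α₁, α₂, α₃; α₂, α₃, α₄; α₃, α₄, α₅]).det * Polynomial.X ^ 3
      - Polynomial.C (!![α₀, α₂, α₃; α₁, α₃, α₄; α₂, α₄, α₅]).det * Polynomial.X ^ 2
      + Polynomial.C (!![α₀, α₁, α₃; α₁, α₂, α₄; α₂, α₃, α₅]).det * Polynomial.X
      - Polynomial.C (!![α₀, α₁, α₂; α₁, α₂, α₃; α₂, α₃, α₄]).det)
    (hdeg : g.degree = 3)
    (t : ℝ) (z : ℂ) (hz : z.im ≠ 0)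
    (hfac : g.map (algebraMap ℝ ℂ) =
      Polynomial.C ((algebraMap ℝ ℂ) (!![α₁, α₂, α₃; α₂, α₃, α₄; α₃, α₄, α₅]).det) *
        ((Polynomial.X - Polynomial.C (t : ℂ)) * ((Polynomial.X - Polynomial.C z) *
          (Polynomial.X - Polynomial.C (starRingEnd ℂ z))))) :
    realRank f 5 = 4 := by
  have hfe : ∀ x y : ℝ, eval ![x, y] f = α₀ * x ^ 5 + 5 * α₁ * x ^ 4 * y + 10 * α₂ * x ^ 3 * y ^ 2
      + 10 * α₃ * x ^ 2 * y ^ 3 + 5 * α₄ * x * y ^ 4 + α₅ * y ^ 5 := by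
    intro x y
    rw [hf]
    simp
  clear hf
  simp only [Matrix.det_fin_three] at hg hfac
  simp only [Matrix.of_apply, Matrix.cons_val] at hg hfac
  obtain ⟨M₀, e0⟩ : ∃ M, M = α₁*α₃*α₅ - α₁*α₄*α₄ - α₂*α₂*α₅ + α₂*α₄*α₃ + α₃*α₂*α₄ - α₃*α₃*α₃ := ⟨_, rfl⟩
  obtain ⟨M₁, e1⟩ : ∃ M, M = α₀*α₃*α₅ - α₀*α₄*α₄ - α₂*α₁*α₅ + α₂*α₄*α₂ + α₃*α₁*α₄ - α₃*α₃*α₂ := ⟨_, rfl⟩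
  obtain ⟨M₂, e2⟩ : ∃ M, M = α₀*α₂*α₅ - α₀*α₄*α₃ - α₁*α₁*α₅ + α₁*α₄*α₂ + α₃*α₁*α₃ - α₃*α₂*α₂ := ⟨_, rfl⟩
  obtain ⟨M₃, e3⟩ : ∃ M, M = α₀*α₂*α₄ - α₀*α₃*α₃ - α₁*α₁*α₄ + α₁*α₃*α₂ + α₂*α₁*α₃ - α₂*α₂*α₂ := ⟨_, rfl⟩
  rw [← e0] at hg hfac
  rw [← e1, ← e2, ← e3] at hg
  have hM : M₀ ≠ 0 := by
    intro h0
    rw [h0] at hfac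
    simp only [map_zero, zero_mul] at hfac
    rw [Polynomial.map_eq_zero] at hfac
    rw [hfac] at hdeg
    simp at hdeg
  have key : ∀ r : ℝ, M₀ * r^3 - M₁ * r^2 + M₂ * r - M₃ = M₀ * ((r - t) * ((r - z.re)^2 + z.im^2)) := by
    intro r
    have h1 := congrArg (Polynomial.eval (r:ℂ)) hfac
    rw [hg] at h1
    have e : (((M₀ * r^3 - M₁ * r^2 + M₂ * r - M₃ : ℝ)) : ℂ) =
       ((M₀ * ((r - t) * ((r - z.re)^2 + z.im^2)) : ℝ) : ℂ) := by
      have hz2 : ((r:ℂ) - z) * (r - (starRingEnd ℂ) z) = (((r - z.re)^2 + z.im^2 : ℝ) : ℂ) := by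
        apply Complex.ext
        · rw [Complex.ofReal_re]; simp; ring
        · rw [Complex.ofReal_im]; simp; ring
      simp at h1
      rw [hz2] at h1
      push_cast at h1 ⊢
      exact h1
    exact_mod_cast e
  have r0 := key 0
  have r1 := key 1
  have r2 := key (-1)
  have i1 : M₀ * (t + 2 * z.re) = M₁ := by linarith
  have i2 : M₀ * (2 * z.re * t + z.re^2 + z.im^2) = M₂ := by linarith
  have i3 : M₀ * (t * (z.re^2 + z.im^2)) = M₃ := by linarith
  have up : HasDecomp f 5 4 := by
    refine upper α₀ α₁ α₂ α₃ α₄ α₅ t z.re z.im hz ?_ ?_ ?_ f hsf hnot5 hfe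
    · apply mul_left_cancel₀ hM
      linear_combination α₃ * (-i1) + α₄ * i2 - α₅ * i3 + (α₂ * e0 - α₃ * e1 + α₄ * e2 - α₅ * e3)
    · apply mul_left_cancel₀ hM
      linear_combination α₂ * (-i1) + α₃ * i2 - α₄ * i3 + (α₁ * e0 - α₂ * e1 + α₃ * e2 - α₄ * e3)
    · apply mul_left_cancel₀ hM
      linear_combination α₁ * (-i1) + α₂ * i2 - α₃ * i3 + (α₀ * e0 - α₁ * e1 + α₂ * e2 - α₃ * e3)
  unfold realRank
  apply le_antisymm
  · exact Nat.sInf_le up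
  · apply le_csInf ⟨4, up⟩
    intro r hr
    by_contra hlt
    exact no_decomp α₀ α₁ α₂ α₃ α₄ α₅ t z.re z.im M₀ hz hM e0 (i1.trans e1) (i2.trans e2)
      (i3.trans e3) f hfe r (by omega) hr
end
end
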